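/- arXiv:2601.00350 — 4 statements merged into one kernel-verified Lean document; each statement's English description precedes it below -/
import Mathlib

section
/- For every σ > 0 and every s > 0, ∫₀^{σ√(2s)} (1 − e^{−(s − r²/(2σ²))}) · (r/σ²) · e^{−r²/(2σ²)} dr = 1 − (1 + s)e^{−s}. Consequently, since 1 − (1+s)e^{−s} < 1 − e^{−s} for all s > 0, the subjective detection probability of the uniformly optimal plan for a circular bivariate normal prior is strictly less than its true detection probability at every positive search time. -/
open Real intervalIntegral

/-!
In the variable `u = r ^ 2 / (2 * σ ^ 2)` the radial part of the prior becomes the standard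
exponential law `exp (-u) du`, and the optimal plan allocates effort `s - u` to `u ≤ s`, that is to
the disc of radius `σ * √(2 * s)`. There the failures to detect have constant density
`exp (-(s - u)) * exp (-u) = exp (-s)`, so they amount to `s * exp (-s)`. This is lost on top of the
prior mass `exp (-s)` outside the disc, and it is exactly the gap between the subjective and the
true detection probability.
-/

theorem mul_sqrt_two_mul_sq_div_two_mul_sq {σ s : ℝ} (hσ : σ ≠ 0) (hs : 0 ≤ s) :
    (σ * √(2 * s)) ^ 2 / (2 * σ ^ 2) = s := by
  rw [mul_pow, sq_sqrt (by positivity)]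
  field_simp

theorem integral_div_sq_smul_comp_sq_div_two_mul_sq {E : Type*} [NormedAddCommGroup E]
    [NormedSpace ℝ E] (σ : ℝ) {a b : ℝ} (ha : 0 ≤ a) (hb : 0 ≤ b) (g : ℝ → E) :
    ∫ r in a..b, (r / σ ^ 2) • g (r ^ 2 / (2 * σ ^ 2)) =
      ∫ u in a ^ 2 / (2 * σ ^ 2)..b ^ 2 / (2 * σ ^ 2), g u := by
  have hderiv (r : ℝ) : HasDerivAt (fun x ↦ x ^ 2 / (2 * σ ^ 2)) (r / σ ^ 2) r := by
    refine ((hasDerivAt_pow 2 r).div_const (2 * σ ^ 2)).congr_deriv ?_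
    rw [Nat.cast_ofNat, pow_one, mul_div_mul_left _ _ two_ne_zero]
  have hnonneg : ∀ r ∈ Set.Ioo (min a b) (max a b), 0 ≤ r / σ ^ 2 := fun r hr ↦
    div_nonneg ((le_min ha hb).trans hr.1.le) (sq_nonneg σ)
  exact integral_deriv_smul_comp_of_deriv_nonneg (by fun_prop) (fun r _ ↦ hderiv r) hnonneg

theorem integral_one_sub_exp_mul_exp_neg (s a b : ℝ) :
    ∫ u in a..b, (1 - exp (-(s - u))) * exp (-u) =
      exp (-a) - exp (-b) - (b - a) * exp (-s) := by
  have hconst (u : ℝ) : (1 - exp (-(s - u))) * exp (-u) = exp (-u) - exp (-s) := by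
    rw [sub_mul, one_mul, ← exp_add]
    ring_nf
  calc ∫ u in a..b, (1 - exp (-(s - u))) * exp (-u)
      = ∫ u in a..b, (exp (-u) - exp (-s)) := by simp only [hconst]
    _ = (∫ u in a..b, exp (-u)) - ∫ _ in a..b, exp (-s) :=
      integral_sub (Continuous.intervalIntegrable (by fun_prop) _ _) intervalIntegrable_const
    _ = exp (-a) - exp (-b) - (b - a) * exp (-s) := by
      rw [integral_comp_neg, integral_exp, integral_const, smul_eq_mul]

/-- Example 4 (continuous case): for every `σ > 0` and `s > 0`, the subjective
detection probability of the uniformly optimal plan for a circular bivariate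
normal prior, written in polar coordinates, equals `1 - (1+s)e^{-s}`, which is
strictly less than the true detection probability `1 - e^{-s}`. -/
theorem stmt_7 (σ s : ℝ) (hσ : 0 < σ) (hs : 0 < s) :
    (∫ r in (0 : ℝ)..(σ * Real.sqrt (2 * s)),
        (1 - Real.exp (-(s - r ^ 2 / (2 * σ ^ 2)))) * (r / σ ^ 2)
          * Real.exp (-(r ^ 2) / (2 * σ ^ 2)))
      = 1 - (1 + s) * Real.exp (-s) ∧
    1 - (1 + s) * Real.exp (-s) < 1 - Real.exp (-s) := by
  constructor
  · calc
      _ = ∫ r in (0 : ℝ)..σ * √(2 * s), (r / σ ^ 2) •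
            ((1 - exp (-(s - r ^ 2 / (2 * σ ^ 2)))) * exp (-(r ^ 2 / (2 * σ ^ 2)))) := by
        simp only [smul_eq_mul, neg_div, mul_assoc, mul_left_comm]
      _ = ∫ u in (0 : ℝ)..s, (1 - exp (-(s - u))) * exp (-u) := by
        rw [integral_div_sq_smul_comp_sq_div_two_mul_sq σ le_rfl (by positivity)
            fun u ↦ (1 - exp (-(s - u))) * exp (-u),
          mul_sqrt_two_mul_sq_div_two_mul_sq hσ.ne' hs.le, zero_pow two_ne_zero, zero_div]
      _ = 1 - (1 + s) * exp (-s) := by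
        rw [integral_one_sub_exp_mul_exp_neg, neg_zero, exp_zero]
        ring
  · have hlost : 0 < s * exp (-s) := mul_pos hs (exp_pos _)
    linarith
end

section
/- For every u > 0, 1 − (1 + u/2)·e^{−u/2} > 1 − (4/3)e^{−u/4} + (1/3)e^{−u}; equivalently, (4/3)e^{−u/4} − (1/3)e^{−u} > (1 + u/2)e^{−u/2}. Moreover 1 − e^{−u} > 1 − e^{−u/2} for all u > 0. In words: the uniformly optimal plan φ* has strictly larger subjective detection probability than the alternative plan φ at every positive time, while φ has strictly larger true detection probability than φ*. -/
/-!
Multiplied by `3 * exp (u / 2)`, the subjective comparison is the inequality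
`3 * (1 + u / 2) < 4 * exp (u / 4) - exp (-u / 2)`, with equality at `u = 0`. The difference of the
two sides is strictly increasing in `u`, because `2 * exp t + exp (-2 * t) > 3` for `t ≠ 0`: this is
`exp y > 1 + y` used twice, with weights for which the linear terms cancel.
-/

open Real

section ExpDifference

variable {p q x : ℝ}

theorem add_lt_mul_exp_add_mul_exp_neg (hp : 0 < p) (hq : 0 < q) (hx : x ≠ 0) :
    p + q < p * exp (q * x) + q * exp (-(p * x)) :=
  calc
    p + q = p * (q * x + 1) + q * (-(p * x) + 1) := by ring
    _ < p * exp (q * x) + q * exp (-(p * x)) := by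
      gcongr
      · exact add_one_lt_exp (mul_ne_zero hq.ne' hx)
      · exact add_one_lt_exp (neg_ne_zero.mpr (mul_ne_zero hp.ne' hx))

theorem hasDerivAt_sq_mul_exp_sub_sq_mul_exp_neg_sub_linear (p q x : ℝ) :
    HasDerivAt (fun y ↦ p ^ 2 * exp (q * y) - q ^ 2 * exp (-(p * y)) - p * q * (p + q) * y)
      (p * q * (p * exp (q * x) + q * exp (-(p * x)) - (p + q))) x := by
  have hexp_q : HasDerivAt (fun y ↦ exp (q * y)) (exp (q * x) * q) x :=
    (hasDerivAt_const_mul q).exp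
  have hexp_p : HasDerivAt (fun y ↦ exp (-(p * y))) (exp (-(p * x)) * -p) x :=
    (hasDerivAt_const_mul p).fun_neg.exp
  refine (((hexp_q.const_mul (p ^ 2)).fun_sub (hexp_p.const_mul (q ^ 2))).fun_sub
    (hasDerivAt_const_mul (p * q * (p + q)))).congr_deriv ?_
  ring

theorem strictMono_sq_mul_exp_sub_sq_mul_exp_neg_sub_linear (hp : 0 < p) (hq : 0 < q) :
    StrictMono fun x ↦ p ^ 2 * exp (q * x) - q ^ 2 * exp (-(p * x)) - p * q * (p + q) * x := by
  have hderiv := hasDerivAt_sq_mul_exp_sub_sq_mul_exp_neg_sub_linear p q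
  have hcont := continuous_iff_continuousAt.mpr fun x ↦ (hderiv x).continuousAt
  have hpos {x : ℝ} (hx : x ≠ 0) :
      0 < p * q * (p * exp (q * x) + q * exp (-(p * x)) - (p + q)) :=
    mul_pos (mul_pos hp hq) (sub_pos.mpr (add_lt_mul_exp_add_mul_exp_neg hp hq hx))
  refine StrictMonoOn.Iic_union_Ici (a := 0) ?_ ?_
  · refine strictMonoOn_of_hasDerivWithinAt_pos (convex_Iic 0) hcont.continuousOn
      (fun x _ ↦ (hderiv x).hasDerivWithinAt) fun x hx ↦ hpos ?_
    rw [interior_Iic] at hx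
    exact hx.ne
  · refine strictMonoOn_of_hasDerivWithinAt_pos (convex_Ici 0) hcont.continuousOn
      (fun x _ ↦ (hderiv x).hasDerivWithinAt) fun x hx ↦ hpos ?_
    rw [interior_Ici] at hx
    exact hx.ne'

theorem linear_lt_sq_mul_exp_sub_sq_mul_exp_neg (hp : 0 < p) (hq : 0 < q) (hx : 0 < x) :
    (p + q) * (p - q + p * q * x) < p ^ 2 * exp (q * x) - q ^ 2 * exp (-(p * x)) := by
  have hzero_lt := strictMono_sq_mul_exp_sub_sq_mul_exp_neg_sub_linear hp hq hx
  simp only [mul_zero, neg_zero, exp_zero] at hzero_lt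
  linarith

end ExpDifference

/-- Example 6 (continuous case), comparison: for every `u > 0` the uniformly
optimal plan has strictly larger subjective detection probability
`1 - (1+u/2)e^{-u/2} > 1 - (4/3)e^{-u/4} + (1/3)e^{-u}` (equivalently
`(4/3)e^{-u/4} - (1/3)e^{-u} > (1+u/2)e^{-u/2}`), while the alternative plan
has strictly larger true detection probability `1 - e^{-u} > 1 - e^{-u/2}`. -/
theorem stmt_9 (u : ℝ) (hu : 0 < u) :
    (1 - (1 + u / 2) * Real.exp (-u / 2)
      > 1 - (4 / 3) * Real.exp (-u / 4) + (1 / 3) * Real.exp (-u)) ∧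
    ((4 / 3) * Real.exp (-u / 4) - (1 / 3) * Real.exp (-u)
      > (1 + u / 2) * Real.exp (-u / 2)) ∧
    (1 - Real.exp (-u) > 1 - Real.exp (-u / 2)) := by
  have subjective :
      (1 + u / 2) * exp (-u / 2) < 4 / 3 * exp (-u / 4) - 1 / 3 * exp (-u) :=
    calc
      (1 + u / 2) * exp (-u / 2)
          = (2 + 1) * (2 - 1 + 2 * 1 * (u / 4)) / 3 * exp (-u / 2) := by ring
      _ < (2 ^ 2 * exp (1 * (u / 4)) - 1 ^ 2 * exp (-(2 * (u / 4)))) / 3 * exp (-u / 2) := by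
        gcongr
        exact linear_lt_sq_mul_exp_sub_sq_mul_exp_neg two_pos one_pos (by positivity)
      _ = 4 / 3 * exp (1 * (u / 4) + -u / 2) - 1 / 3 * exp (-(2 * (u / 4)) + -u / 2) := by
        rw [exp_add, exp_add]; ring
      _ = 4 / 3 * exp (-u / 4) - 1 / 3 * exp (-u) := by ring_nf
  have true_detection : exp (-u) < exp (-u / 2) := exp_lt_exp.mpr (by linarith)
  exact ⟨by linarith, subjective, sub_lt_sub_left true_detection 1⟩
end

section
/- Let σ₁, σ₂ > 0 with σ₁ ≠ σ₂ and let 0 < w < 1. Then w/σ₁ + (1−w)/σ₂ > 1/√(w σ₁² + (1−w) σ₂²). Consequently, for every K > 0, 1 − exp(−√(K/(π(wσ₁² + (1−w)σ₂²)))) < 1 − exp(−(w/σ₁ + (1−w)/σ₂)·√(K/π)): the true detection probability of the uniformly optimal plan based on the composite normal prior is strictly less than that of the composite plan built from the two individual uniformly optimal plans. -/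
open Real

/-!
The first inequality is strict Jensen for the strictly convex function `x ↦ 1 / √x` at the distinct
variances `σ₁ ^ 2` and `σ₂ ^ 2`. Its two sides, multiplied by `√(K / π)`, are the effort densities
of the two plans at the origin, and detection increases strictly with effort.
-/

theorem strictConvexOn_rpow_of_neg {p : ℝ} (hp : p < 0) :
    StrictConvexOn ℝ (Set.Ioi 0) fun x : ℝ ↦ x ^ p := by
  have hconvex : StrictConvexOn ℝ (Set.Ioi 0) fun x ↦ p * log x := by
    refine ⟨convex_Ioi 0, fun x hx y hy hxy a b ha hb hab ↦ ?_⟩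
    have hlog := strictConcaveOn_log_Ioi.2 hx hy hxy ha hb hab
    simp only [smul_eq_mul] at hlog ⊢
    linarith [mul_lt_mul_of_neg_left hlog hp]
  have hcont : ContinuousOn (fun x ↦ p * log x) (Set.Ioi 0) :=
    continuousOn_const.mul (continuousOn_log.mono fun _ hx ↦ ne_of_gt hx)
  have himage : Convex ℝ ((fun x ↦ p * log x) '' Set.Ioi 0) :=
    (isPreconnected_Ioi.image _ hcont).ordConnected.convex
  have hexp := (convexOn_exp.subset (Set.subset_univ _) himage).comp_strictConvexOn hconvex
    (exp_strictMono.strictMonoOn _)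
  exact hexp.congr fun x hx ↦ by
    rw [Function.comp_apply, rpow_def_of_pos hx, mul_comm]

theorem strictConvexOn_one_div_sqrt :
    StrictConvexOn ℝ (Set.Ioi 0) fun x : ℝ ↦ 1 / √x :=
  (strictConvexOn_rpow_of_neg (p := -(1 / 2)) (by norm_num)).congr fun x hx ↦ by
    simp only [rpow_neg (le_of_lt hx), sqrt_eq_rpow, one_div]

theorem strictMono_one_sub_exp_neg : StrictMono fun y : ℝ ↦ 1 - exp (-y) :=
  fun _ _ hxy ↦ sub_lt_sub_left (exp_lt_exp.mpr (neg_lt_neg hxy)) 1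

theorem sqrt_div_mul_eq_one_div_sqrt_mul (a b : ℝ) {c : ℝ} (hc : 0 ≤ c) :
    √(a / (b * c)) = 1 / √c * √(a / b) := by
  rw [← div_div, sqrt_div' _ hc, one_div_mul_eq_div]

/-- Example 8 (continuous case), generalized: for `σ₁, σ₂ > 0` with `σ₁ ≠ σ₂`
and `0 < w < 1`, `w/σ₁ + (1-w)/σ₂ > 1/√(wσ₁² + (1-w)σ₂²)`; consequently, for
every total effort `K > 0`, the true detection probability of the uniformly
optimal plan for the composite normal prior is strictly less than that of the
composite plan. -/
theorem stmt_11 (σ₁ σ₂ w : ℝ) (hσ₁ : 0 < σ₁) (hσ₂ : 0 < σ₂) (hne : σ₁ ≠ σ₂)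
    (hw₀ : 0 < w) (hw₁ : w < 1) :
    (w / σ₁ + (1 - w) / σ₂ > 1 / Real.sqrt (w * σ₁ ^ 2 + (1 - w) * σ₂ ^ 2)) ∧
    (∀ K : ℝ, 0 < K →
      1 - Real.exp (-Real.sqrt (K / (Real.pi * (w * σ₁ ^ 2 + (1 - w) * σ₂ ^ 2))))
        < 1 - Real.exp (-((w / σ₁ + (1 - w) / σ₂) * Real.sqrt (K / Real.pi)))) := by
  have hw : 0 < 1 - w := sub_pos.mpr hw₁
  have hsq : σ₁ ^ 2 ≠ σ₂ ^ 2 := (pow_left_inj₀ hσ₁.le hσ₂.le two_ne_zero).not.mpr hne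
  have jensen : 1 / √(w * σ₁ ^ 2 + (1 - w) * σ₂ ^ 2) < w / σ₁ + (1 - w) / σ₂ := by
    simpa only [smul_eq_mul, sqrt_sq hσ₁.le, sqrt_sq hσ₂.le, mul_one_div] using
      strictConvexOn_one_div_sqrt.2 (pow_pos hσ₁ 2) (pow_pos hσ₂ 2) hsq hw₀ hw
        (add_sub_cancel w 1)
  refine ⟨jensen, fun K hK ↦ strictMono_one_sub_exp_neg ?_⟩
  rw [sqrt_div_mul_eq_one_div_sqrt_mul K π (by positivity)]
  exact mul_lt_mul_of_pos_right jensen (sqrt_pos.mpr (div_pos hK pi_pos))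
end

section
/- Let X be a finite set, let π : X → ℝ be a prior with π(x) ≥ 0 for all x, ∑ₓ π(x) = 1, and π(x₀) > 0 for a fixed x₀ ∈ X. For each E ≥ 0 let f_E be any maximizer of ∑ₓ π(x)(1 − e^{−f(x)}) over allocations f : X → ℝ with f(x) ≥ 0 and ∑ₓ f(x) = E. Then the true detection probability of f_E at x₀ tends to one: for every ε > 0 there exists E₀ such that for every E ≥ E₀ and every such maximizer f_E, 1 − e^{−f_E(x₀)} > 1 − ε. -/
open Finset

/-! Effort spread proportionally to the prior grows without bound on every cell of positive prior,
so by dominated convergence its subjective detection probability tends to one. An optimal allocation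
does at least as well, and its subjective probability of missing the target dominates the
contribution `π x₀ * (1 - d x₀ (f x₀))` of the true cell. -/

section OptimalSearch

open Filter Topology

variable {X : Type*}

/-- A prior distribution of the target on a possibly infinite discrete possibility area. -/
structure IsPrior (π : X → ℝ) : Prop where
  nonneg (x : X) : 0 ≤ π x
  hasSum_one : HasSum π 1

/-- A detection function whose value `d x y` is the probability of detecting a target in cell `x`
when effort `y` is spent there, detection becoming certain as `y → ∞`. Values at negative efforts
are unconstrained. -/
structure IsDetectionFunction (d : X → ℝ → ℝ) : Prop where
  nonneg (x : X) {y : ℝ} : 0 ≤ y → 0 ≤ d x y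
  le_one (x : X) {y : ℝ} : 0 ≤ y → d x y ≤ 1
  tendsto_one (x : X) : Tendsto (d x) atTop (𝓝 1)

/-- A distribution of the total effort `E` over the cells. -/
structure IsAllocation (E : ℝ) (f : X → ℝ) : Prop where
  nonneg (x : X) : 0 ≤ f x
  hasSum : HasSum f E

/-- The subjective detection probability of the allocation `f` under the prior `π`. -/
noncomputable def detectionProb (π : X → ℝ) (d : X → ℝ → ℝ) (f : X → ℝ) : ℝ :=
  ∑' x, π x * d x (f x)

/-- An allocation of effort `E` maximizing the subjective detection probability: the value at `E` of
a uniformly optimal search plan. -/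
structure IsOptimalAllocation (π : X → ℝ) (d : X → ℝ → ℝ) (E : ℝ) (f : X → ℝ) : Prop where
  isAllocation : IsAllocation E f
  isMaxOn : IsMaxOn (detectionProb π d) {g | IsAllocation E g} f

theorem isDetectionFunction_one_sub_exp_neg :
    IsDetectionFunction fun (_ : X) y ↦ 1 - Real.exp (-y) where
  nonneg _ _ hy := sub_nonneg.2 (Real.exp_le_one_iff.2 (neg_nonpos.2 hy))
  le_one _ y _ := sub_le_self 1 (Real.exp_nonneg (-y))
  tendsto_one _ := by simpa using Real.tendsto_exp_neg_atTop_nhds_zero.const_sub 1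

theorem isAllocation_iff_of_fintype [Fintype X] {E : ℝ} {f : X → ℝ} :
    IsAllocation E f ↔ (∀ x, 0 ≤ f x) ∧ ∑ x, f x = E :=
  ⟨fun hf ↦ ⟨hf.nonneg, (hasSum_fintype f).unique hf.hasSum⟩,
    fun ⟨hf, hE⟩ ↦ ⟨hf, hE ▸ hasSum_fintype f⟩⟩

theorem isOptimalAllocation_iff_of_fintype [Fintype X] {π : X → ℝ} {d : X → ℝ → ℝ} {E : ℝ}
    {f : X → ℝ} :
    IsOptimalAllocation π d E f ↔
      ((∀ x, 0 ≤ f x) ∧ ∑ x, f x = E) ∧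
        ∀ g : X → ℝ, (∀ x, 0 ≤ g x) → ∑ x, g x = E →
          ∑ x, π x * d x (g x) ≤ ∑ x, π x * d x (f x) := by
  have hiff : IsOptimalAllocation π d E f ↔
      IsAllocation E f ∧ IsMaxOn (detectionProb π d) {g | IsAllocation E g} f :=
    ⟨fun h ↦ ⟨h.isAllocation, h.isMaxOn⟩, fun h ↦ ⟨h.1, h.2⟩⟩
  simp only [hiff, isMaxOn_iff, Set.mem_ofPred_eq, isAllocation_iff_of_fintype, detectionProb,
    tsum_fintype, and_imp]

variable {π : X → ℝ} {d : X → ℝ → ℝ} {E : ℝ} {f : X → ℝ}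

theorem IsPrior.isAllocation_const_mul (hπ : IsPrior π) (hE : 0 ≤ E) :
    IsAllocation E fun x ↦ E * π x where
  nonneg x := mul_nonneg hE (hπ.nonneg x)
  hasSum := by simpa using hπ.hasSum_one.mul_left E

theorem IsPrior.norm_mul_detection_le (hπ : IsPrior π) (hd : IsDetectionFunction d) (x : X)
    {y : ℝ} (hy : 0 ≤ y) : ‖π x * d x y‖ ≤ π x := by
  rw [Real.norm_of_nonneg (mul_nonneg (hπ.nonneg x) (hd.nonneg x hy))]
  exact mul_le_of_le_one_right (hπ.nonneg x) (hd.le_one x hy)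

theorem IsPrior.mul_one_sub_le_one_sub_detectionProb (hπ : IsPrior π) (hd : IsDetectionFunction d)
    (hf : ∀ x, 0 ≤ f x) (x₀ : X) :
    π x₀ * (1 - d x₀ (f x₀)) ≤ 1 - detectionProb π d f := by
  have hsummable : Summable fun x ↦ π x * d x (f x) :=
    .of_norm_bounded hπ.hasSum_one.summable fun x ↦ hπ.norm_mul_detection_le hd x (hf x)
  have hmiss : HasSum (fun x ↦ π x * (1 - d x (f x))) (1 - detectionProb π d f) := by
    simp only [mul_sub, mul_one]
    exact hπ.hasSum_one.sub hsummable.hasSum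
  exact le_hasSum hmiss x₀ fun x _ ↦
    mul_nonneg (hπ.nonneg x) (sub_nonneg.2 (hd.le_one x (hf x)))

theorem IsPrior.tendsto_detectionProb_const_mul (hπ : IsPrior π) (hd : IsDetectionFunction d) :
    Tendsto (fun E : ℝ ↦ detectionProb π d fun x ↦ E * π x) atTop (𝓝 1) := by
  rw [← hπ.hasSum_one.tsum_eq]
  refine tendsto_tsum_of_dominated_convergence hπ.hasSum_one.summable (fun x ↦ ?_) ?_
  · rcases (hπ.nonneg x).eq_or_lt with hx | hx
    · simp [← hx]
    · have heffort : Tendsto (fun E : ℝ ↦ E * π x) atTop atTop := tendsto_id.atTop_mul_const hx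
      simpa using ((hd.tendsto_one x).comp heffort).const_mul (π x)
  · filter_upwards [eventually_ge_atTop 0] with E hE x
    exact hπ.norm_mul_detection_le hd x (mul_nonneg hE (hπ.nonneg x))

theorem stmt_13_general (hπ : IsPrior π) (hd : IsDetectionFunction d) {x₀ : X} (hx₀ : 0 < π x₀)
    {ε : ℝ} (hε : 0 < ε) :
    ∀ᶠ E in atTop, ∀ f, IsOptimalAllocation π d E f → 1 - ε < d x₀ (f x₀) := by
  have hlt_one : 1 - π x₀ * ε < 1 := sub_lt_self 1 (mul_pos hx₀ hε)
  filter_upwards [eventually_ge_atTop 0,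
    (hπ.tendsto_detectionProb_const_mul hd).eventually_const_lt hlt_one] with E hE hprop f hf
  have hopt : detectionProb π d (fun x ↦ E * π x) ≤ detectionProb π d f :=
    hf.isMaxOn (hπ.isAllocation_const_mul hE)
  have hmiss : π x₀ * (1 - d x₀ (f x₀)) < π x₀ * ε := by
    linarith [hπ.mul_one_sub_le_one_sub_detectionProb hd hf.isAllocation.nonneg x₀]
  linarith [lt_of_mul_lt_mul_left hmiss hx₀.le]

end OptimalSearch

/-- Section 6, discrete case: let `X` be finite, `π` a prior with `π x₀ > 0`.
For any maximizer `f_E` of the subjective detection probability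
`∑ x, π x (1 - e^{-f x})` over allocations with total effort `E`, the true
detection probability `1 - e^{-f_E x₀}` tends to one as `E → ∞`. -/
theorem stmt_13 (X : Type*) [Fintype X] (π : X → ℝ)
    (hπ0 : ∀ x, 0 ≤ π x) (hπ1 : ∑ x, π x = 1)
    (x₀ : X) (hx₀ : 0 < π x₀) :
    ∀ ε : ℝ, 0 < ε → ∃ E₀ : ℝ, ∀ E : ℝ, E₀ ≤ E → 0 ≤ E →
      ∀ f : X → ℝ, (∀ x, 0 ≤ f x) → (∑ x, f x) = E →
        (∀ g : X → ℝ, (∀ x, 0 ≤ g x) → (∑ x, g x) = E →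
          ∑ x, π x * (1 - Real.exp (-(g x))) ≤ ∑ x, π x * (1 - Real.exp (-(f x)))) →
        1 - Real.exp (-(f x₀)) > 1 - ε := by
  intro ε hε
  obtain ⟨E₀, hE₀⟩ := Filter.eventually_atTop.1 <| stmt_13_general
    ⟨hπ0, hπ1 ▸ hasSum_fintype π⟩ isDetectionFunction_one_sub_exp_neg hx₀ hε
  exact ⟨E₀, fun E hE _ f hf hsum hmax ↦
    hE₀ E hE f (isOptimalAllocation_iff_of_fintype.2 ⟨⟨hf, hsum⟩, hmax⟩)⟩
end
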